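/- There exists n₀ ∈ ℕ such that the following holds for every integer D with n := 2^D ≥ n₀, every α ∈ (0, 0.01), every ℓ ∈ {0,1}, and every nonzero s ∈ {0,1}^D. Let X be the number of distinct values among n i.i.d. samples drawn from the mixture D^α_{ℓ,s} := α·D_{ℓ,s} + (1−α)·U_D (which samples from D_{ℓ,s} with probability α and from U_D with probability 1−α). Then Pr[ |X − (1 − e^{−1}·cosh(α))·n| > 10·√n ] < 0.01, where cosh(α) = (e^α + e^{−α})/2. -/

import Mathlib

/-- The uniform distribution on `{0,1}^D`. -/
noncomputable def unifD (D : ℕ) : (Fin D → ZMod 2) → ℝ := fun _ => ((2 : ℝ) ^ D)⁻¹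

/-- The uniform distribution on `{x ∈ {0,1}^D : ⟨x,s⟩ = l (mod 2)}`. -/
noncomputable def parityD (D : ℕ) (l : ZMod 2) (s : Fin D → ZMod 2) :
    (Fin D → ZMod 2) → ℝ :=
  fun x => if ∑ i, x i * s i = l then 2 * ((2 : ℝ) ^ D)⁻¹ else 0

/-- The mixture `D^α_{l,s} = α·D_{l,s} + (1−α)·U_D`. -/
noncomputable def mixD (D : ℕ) (α : ℝ) (l : ZMod 2) (s : Fin D → ZMod 2) :
    (Fin D → ZMod 2) → ℝ :=
  fun x => α * parityD D l s x + (1 - α) * unifD D x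

/-!
Let `p` be a distribution on a finite set and `N` the number of samples. A value `x` is missed with
probability `(1 - p x) ^ N`, and two distinct values `x`, `y` are both missed with probability
`(1 - p x - p y) ^ N ≤ (1 - p x) ^ N * (1 - p y) ^ N`. The indicators of missed values are thus
negatively correlated, and the variance of their sum is at most a quarter of the number of values.
Replacing `(1 - p x) ^ N` by `exp (-N p x)` changes the mean by at most `N / 2 * ∑ p x ^ 2`.
For `mixD` with `|α| ≤ 1` and `N = n = 2 ^ D`, half of the values have `n p x = 1 + α` and half have
`n p x = 1 - α`, so the approximate mean is exactly `exp (-1) * cosh α * n` and the error is at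
most `1`. Since `n ≥ 2`, the second moment about this mean is at most `n / 4 + 1 ≤ 3 n / 4`, and
Chebyshev's inequality gives the tail bound `3 / (4 r ^ 2)` at `r` times `√n`.
-/

open Finset

lemma sum_ite_lt_abs_le_sum_sq_mul_div {Ω : Type*} [Fintype Ω] {w : Ω → ℝ} (hw : ∀ ω, 0 ≤ w ω)
    (f : Ω → ℝ) {a : ℝ} (ha : 0 < a) :
    ∑ ω, (if a < |f ω| then w ω else 0) ≤ (∑ ω, f ω ^ 2 * w ω) / a ^ 2 := by
  rw [sum_div]
  refine sum_le_sum fun ω _ => ?_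
  have hwω := hw ω
  split_ifs with h
  · have hsq : a ^ 2 ≤ f ω ^ 2 := sq_le_sq.2 (by rw [abs_of_pos ha]; exact h.le)
    rw [le_div_iff₀ (by positivity), mul_comm]
    gcongr
  · positivity

section Samples

variable {ι β : Type*} [Fintype ι] [DecidableEq ι] [Fintype β]

/-- The expectation of a function of independent samples `Y i`, indexed by `ι`, each with
probability mass function `p`. -/
noncomputable def iidExpect (p : β → ℝ) : ((ι → β) → ℝ) →ₗ[ℝ] ℝ :=
  Fintype.linearCombination ℝ fun Y => ∏ i, p (Y i)

lemma iidExpect_apply (p : β → ℝ) (f : (ι → β) → ℝ) :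
    iidExpect p f = ∑ Y, f Y * ∏ i, p (Y i) :=
  Fintype.linearCombination_apply ..

lemma iidExpect_prod (p g : β → ℝ) :
    iidExpect p (fun Y : ι → β => ∏ i, g (Y i)) = (∑ x, g x * p x) ^ Fintype.card ι := by
  simp_rw [iidExpect_apply, ← prod_mul_distrib]
  rw [← Fintype.prod_sum fun (_ : ι) x => g x * p x, prod_const, card_univ]

end Samples

section AvoidIndicator

variable {ι β : Type*} [Fintype ι] [DecidableEq β]

/-- The indicator of the event that no sample `Y i` lies in `A`. -/
def avoidIndicator (A : Finset β) (Y : ι → β) : ℝ :=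
  if ∀ i, Y i ∉ A then 1 else 0

lemma avoidIndicator_mul (A B : Finset β) (Y : ι → β) :
    avoidIndicator A Y * avoidIndicator B Y = avoidIndicator (A ∪ B) Y := by
  simp only [avoidIndicator, mul_ite, mul_one, mul_zero, ← ite_and, mem_union, not_or, forall_and,
    and_comm]

variable [Fintype β]

lemma sum_avoidIndicator_singleton (Y : ι → β) :
    ∑ x, avoidIndicator {x} Y = Fintype.card β - #(univ.image Y) := by
  have hcompl (x : β) : (∀ i, Y i ∉ ({x} : Finset β)) ↔ x ∈ (univ.image Y)ᶜ := by simp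
  simp only [avoidIndicator, hcompl, sum_boole, filter_mem_eq_inter, univ_inter]
  rw [card_compl, Nat.cast_sub (card_le_univ _)]

variable [DecidableEq ι]

lemma iidExpect_avoidIndicator {p : β → ℝ} (hp : ∑ x, p x = 1) (A : Finset β) :
    iidExpect p (avoidIndicator (ι := ι) A) = (1 - ∑ x ∈ A, p x) ^ Fintype.card ι := by
  have hprod (Y : ι → β) : avoidIndicator A Y = ∏ i, if Y i ∉ A then 1 else 0 :=
    Fintype.prod_boole.symm
  have hcompl : ∑ x, (if x ∉ A then 1 else 0) * p x = 1 - ∑ x ∈ A, p x := by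
    simp only [ite_mul, one_mul, zero_mul]
    rw [← sum_filter, filter_notMem_eq_sdiff, ← hp, eq_sub_iff_add_eq]
    exact sum_sdiff (subset_univ A)
  rw [funext hprod, iidExpect_prod p fun x => if x ∉ A then 1 else 0, hcompl]

lemma iidExpect_avoidIndicator_union_singleton_le {p : β → ℝ} (hp0 : ∀ x, 0 ≤ p x)
    (hp : ∑ x, p x = 1) (x y : β) :
    iidExpect p (avoidIndicator (ι := ι) ({x} ∪ {y})) ≤
      (1 - p x) ^ Fintype.card ι * (1 - p y) ^ Fintype.card ι + if x = y then 1 / 4 else 0 := by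
  rw [iidExpect_avoidIndicator hp]
  obtain rfl | hxy := eq_or_ne x y
  · rw [union_self, sum_singleton, if_pos rfl]
    nlinarith [sq_nonneg ((1 - p x) ^ Fintype.card ι - 1 / 2)]
  · have hpair : p x + p y ≤ 1 := by
      rw [← sum_pair hxy, ← hp]
      exact sum_le_univ_sum_of_nonneg hp0
    rw [← insert_eq, sum_pair hxy, if_neg hxy, add_zero, ← mul_pow]
    refine pow_le_pow_left₀ (by linarith) ?_ _
    linarith [mul_nonneg (hp0 x) (hp0 y)]

lemma iidExpect_sq_sum_avoidIndicator_sub {p : β → ℝ} (hp : ∑ x, p x = 1) (c : ℝ) :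
    iidExpect p (fun Y : ι → β => (∑ x, avoidIndicator {x} Y - c) ^ 2) =
      ∑ x, ∑ y, iidExpect p (avoidIndicator (ι := ι) ({x} ∪ {y})) -
        2 * c * ∑ x, (1 - p x) ^ Fintype.card ι + c ^ 2 := by
  have hexpand : (fun Y : ι → β => (∑ x, avoidIndicator {x} Y - c) ^ 2) =
      ∑ x, ∑ y, avoidIndicator ({x} ∪ {y}) - (2 * c) • ∑ x, avoidIndicator {x} +
        c ^ 2 • avoidIndicator ∅ := by
    ext Y
    simp only [Pi.add_apply, Pi.sub_apply, Pi.smul_apply, Finset.sum_apply, ← avoidIndicator_mul,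
      ← sum_mul_sum, smul_eq_mul]
    simp only [avoidIndicator, notMem_empty, not_false_eq_true, implies_true, if_true]
    ring
  rw [hexpand]
  simp only [map_add, map_sub, map_smul, map_sum, smul_eq_mul, sum_singleton, sum_empty, sub_zero,
    one_pow, mul_one, iidExpect_avoidIndicator hp]

lemma iidExpect_sq_sum_avoidIndicator_sub_le {p : β → ℝ} (hp0 : ∀ x, 0 ≤ p x)
    (hp : ∑ x, p x = 1) (c : ℝ) :
    iidExpect p (fun Y : ι → β => (∑ x, avoidIndicator {x} Y - c) ^ 2) ≤
      Fintype.card β / 4 + (∑ x, (1 - p x) ^ Fintype.card ι - c) ^ 2 := by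
  rw [iidExpect_sq_sum_avoidIndicator_sub hp]
  have hpairs : ∑ x, ∑ y, iidExpect p (avoidIndicator (ι := ι) ({x} ∪ {y})) ≤
      (∑ x, (1 - p x) ^ Fintype.card ι) ^ 2 + Fintype.card β / 4 := calc
    _ ≤ ∑ x, ∑ y, ((1 - p x) ^ Fintype.card ι * (1 - p y) ^ Fintype.card ι +
          if x = y then 1 / 4 else 0) := by
      gcongr with x _ y _
      exact iidExpect_avoidIndicator_union_singleton_le hp0 hp x y
    _ = _ := by
      simp only [sum_add_distrib, ← sum_mul_sum, sum_ite_eq, mem_univ, if_true, sum_const,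
        card_univ, nsmul_eq_mul]
      ring
  linarith

theorem sum_ite_lt_abs_card_image_sub_le {p : β → ℝ} (hp0 : ∀ x, 0 ≤ p x) (hp : ∑ x, p x = 1)
    (c : ℝ) {a : ℝ} (ha : 0 < a) :
    ∑ Y : ι → β, (if a < |(#(univ.image Y) : ℝ) - (Fintype.card β - c)| then ∏ i, p (Y i) else 0) ≤
      (Fintype.card β / 4 + (∑ x, (1 - p x) ^ Fintype.card ι - c) ^ 2) / a ^ 2 := by
  have hmissed (Y : ι → β) : |(#(univ.image Y) : ℝ) - (Fintype.card β - c)| =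
      |∑ x, avoidIndicator {x} Y - c| := by
    rw [sum_avoidIndicator_singleton, abs_sub_comm]
    ring_nf
  simp_rw [hmissed]
  have hweight (Y : ι → β) : 0 ≤ ∏ i, p (Y i) := prod_nonneg fun i _ => hp0 (Y i)
  refine (sum_ite_lt_abs_le_sum_sq_mul_div hweight _ ha).trans ?_
  rw [← iidExpect_apply p fun Y : ι → β => (∑ x, avoidIndicator {x} Y - c) ^ 2]
  gcongr
  exact iidExpect_sq_sum_avoidIndicator_sub_le hp0 hp c

end AvoidIndicator

section PoissonApproximation

open Real

lemma exp_neg_le_one_sub_add_sq_div_two {u : ℝ} (hu : 0 ≤ u) : exp (-u) ≤ 1 - u + u ^ 2 / 2 := by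
  rw [exp_neg, inv_le_iff_one_le_mul₀ (exp_pos u)]
  calc
    1 ≤ (1 - u + u ^ 2 / 2) * (1 + u + u ^ 2 / 2) := by nlinarith [sq_nonneg (u ^ 2)]
    _ ≤ (1 - u + u ^ 2 / 2) * exp u := by
      gcongr
      · nlinarith [sq_nonneg (u - 1)]
      · exact quadratic_le_exp_of_nonneg hu

lemma abs_one_sub_pow_sub_exp_neg_mul_le {u : ℝ} (hu0 : 0 ≤ u) (hu1 : u ≤ 1) (N : ℕ) :
    |(1 - u) ^ N - exp (-(N * u))| ≤ N * u ^ 2 / 2 := by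
  have hexp : exp (-(N * u)) = exp (-u) ^ N := by rw [← exp_nat_mul, mul_neg]
  have hbase : |1 - u - exp (-u)| ≤ u ^ 2 / 2 := by
    rw [abs_sub_comm, abs_of_nonneg (sub_nonneg.2 (one_sub_le_exp_neg u))]
    linarith [exp_neg_le_one_sub_add_sq_div_two hu0]
  have hmax : max |1 - u| |exp (-u)| ≤ 1 := by
    rw [abs_of_nonneg (sub_nonneg.2 hu1), abs_exp]
    exact max_le (by linarith) (exp_le_one_iff.2 (by linarith))
  calc
    |(1 - u) ^ N - exp (-(N * u))|
      ≤ |1 - u - exp (-u)| * N * max |1 - u| |exp (-u)| ^ (N - 1) := by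
      rw [hexp]
      exact abs_pow_sub_pow_le ..
    _ ≤ u ^ 2 / 2 * N * 1 := by
      gcongr
      exact pow_le_one₀ (by positivity) hmax
    _ = N * u ^ 2 / 2 := by ring

lemma abs_sum_one_sub_pow_sub_sum_exp_le {β : Type*} [Fintype β] {p : β → ℝ}
    (hp0 : ∀ x, 0 ≤ p x) (hp1 : ∀ x, p x ≤ 1) (N : ℕ) :
    |∑ x, (1 - p x) ^ N - ∑ x, exp (-(N * p x))| ≤ N * (∑ x, p x ^ 2) / 2 := by
  rw [← sum_sub_distrib, mul_sum, sum_div]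
  exact (abs_sum_le_sum_abs _ _).trans
    (sum_le_sum fun x _ => abs_one_sub_pow_sub_exp_neg_mul_le (hp0 x) (hp1 x) N)

end PoissonApproximation

lemma card_nsmul_sum_comp_of_surjective {G H M : Type*} [AddGroup G] [Fintype G] [AddGroup H]
    [Fintype H] [AddCommMonoid M] {f : G →+ H} (hf : Function.Surjective f) (F : H → M) :
    Fintype.card H • ∑ x, F (f x) = Fintype.card G • ∑ h, F h := by
  have htranslate (k : H) : ∑ x, F (f x) = ∑ x, F (f x + k) := by
    obtain ⟨g, rfl⟩ := hf k
    simp_rw [← map_add]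
    exact (Equiv.sum_comp (Equiv.addRight g) fun x => F (f x)).symm
  calc
    Fintype.card H • ∑ x, F (f x) = ∑ k, ∑ x, F (f x + k) := by
      simp only [← htranslate, sum_const, card_univ]
    _ = ∑ x, ∑ k, F (f x + k) := sum_comm
    _ = ∑ _x : G, ∑ h, F h := sum_congr rfl fun x _ => Equiv.sum_comp (Equiv.addLeft (f x)) F
    _ = Fintype.card G • ∑ h, F h := by rw [sum_const, card_univ]

lemma card_nsmul_sum_comp_dotProduct {ι K M : Type*} [Fintype ι] [DecidableEq ι] [Field K]
    [Fintype K] [AddCommMonoid M] {s : ι → K} (hs : s ≠ 0) (F : K → M) :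
    Fintype.card K • ∑ x : ι → K, F (x ⬝ᵥ s) = Fintype.card (ι → K) • ∑ t, F t := by
  have hne : (dotProductBilin K K).flip s ≠ 0 := fun h =>
    hs <| dotProduct_eq_zero s fun x => by
      rw [dotProduct_comm]
      exact DFunLike.congr_fun h x
  exact card_nsmul_sum_comp_of_surjective
    (f := ((dotProductBilin K K).flip s).toAddMonoidHom) (LinearMap.surjective hne) F

section Mixture

variable {D : ℕ} {α : ℝ} {l : ZMod 2} {s : Fin D → ZMod 2}

lemma mixD_eq_ite (x : Fin D → ZMod 2) :
    mixD D α l s x = if x ⬝ᵥ s = l then (1 + α) / 2 ^ D else (1 - α) / 2 ^ D := by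
  have hparity : parityD D l s x = if x ⬝ᵥ s = l then 2 * ((2 : ℝ) ^ D)⁻¹ else 0 := rfl
  rw [mixD, hparity, unifD]
  split_ifs <;> ring

lemma mixD_nonneg (hα : |α| ≤ 1) (x : Fin D → ZMod 2) : 0 ≤ mixD D α l s x := by
  obtain ⟨hα_ge, hα_le⟩ := abs_le.1 hα
  rw [mixD_eq_ite]
  split_ifs <;> exact div_nonneg (by linarith) (by positivity)

lemma sum_comp_mixD (hs : s ≠ 0) (F : ℝ → ℝ) :
    ∑ x, F (mixD D α l s x) = 2 ^ D * ((F ((1 + α) / 2 ^ D) + F ((1 - α) / 2 ^ D)) / 2) := by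
  have hbits : ∑ t : ZMod 2, F (if t = l then (1 + α) / 2 ^ D else (1 - α) / 2 ^ D) =
      F ((1 + α) / 2 ^ D) + F ((1 - α) / 2 ^ D) := by
    have huniv : ∀ t : ZMod 2, univ = {t, t + 1} := by decide
    rw [huniv l, sum_pair (by simp)]
    simp
  have hfibers := card_nsmul_sum_comp_dotProduct hs
    fun t => F (if t = l then (1 + α) / 2 ^ D else (1 - α) / 2 ^ D)
  rw [hbits] at hfibers
  simp only [ZMod.card, Fintype.card_fun, Fintype.card_fin, nsmul_eq_mul, Nat.cast_pow,
    Nat.cast_ofNat] at hfibers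
  simp_rw [mixD_eq_ite]
  linarith

lemma sum_mixD (hs : s ≠ 0) : ∑ x, mixD D α l s x = 1 := by
  rw [sum_comp_mixD hs fun t => t]
  field_simp
  ring

lemma mixD_le_one (hα : |α| ≤ 1) (hs : s ≠ 0) (x : Fin D → ZMod 2) : mixD D α l s x ≤ 1 :=
  sum_mixD (α := α) (l := l) hs ▸ single_le_sum (fun y _ => mixD_nonneg hα y) (mem_univ x)

lemma sum_mixD_sq (hs : s ≠ 0) : ∑ x, mixD D α l s x ^ 2 = (1 + α ^ 2) / 2 ^ D := by
  rw [sum_comp_mixD hs fun t => t ^ 2]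
  field_simp
  ring

lemma sum_exp_neg_two_pow_mul_mixD (hs : s ≠ 0) :
    ∑ x, Real.exp (-(2 ^ D * mixD D α l s x)) = Real.exp (-1) * Real.cosh α * 2 ^ D := by
  rw [sum_comp_mixD hs fun t => Real.exp (-(2 ^ D * t)), Real.cosh_eq,
    mul_div_cancel₀ _ (by positivity), mul_div_cancel₀ _ (by positivity), neg_add, neg_sub,
    Real.exp_add, sub_eq_neg_add, Real.exp_add]
  ring

lemma abs_sum_one_sub_mixD_pow_sub_le (hα : |α| ≤ 1) (hs : s ≠ 0) :
    |∑ x, (1 - mixD D α l s x) ^ 2 ^ D - Real.exp (-1) * Real.cosh α * 2 ^ D| ≤ 1 := by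
  have happrox := abs_sum_one_sub_pow_sub_sum_exp_le (mixD_nonneg (l := l) (s := s) hα)
    (mixD_le_one hα hs) (2 ^ D)
  push_cast at happrox
  rw [sum_exp_neg_two_pow_mul_mixD hs, sum_mixD_sq hs, mul_div_cancel₀ _ (by positivity)]
    at happrox
  linarith [(sq_le_one_iff_abs_le_one α).2 hα]

theorem stmt_11_general (hα : |α| ≤ 1) (hs : s ≠ 0) {r : ℝ} (hr : 0 < r) :
    ∑ Y : Fin (2 ^ D) → (Fin D → ZMod 2),
        (if r * Real.sqrt ((2 : ℝ) ^ D) <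
            |((Finset.univ.image Y).card : ℝ) -
              (1 - Real.exp (-1) * Real.cosh α) * (2 : ℝ) ^ D| then
          ∏ i, mixD D α l s (Y i) else 0)
      ≤ 3 / (4 * r ^ 2) := by
  have hD : D ≠ 0 := by
    rintro rfl
    exact hs (Subsingleton.elim _ _)
  have hn : (2 : ℝ) ≤ 2 ^ D := le_self_pow₀ one_le_two hD
  have hcard : (Fintype.card (Fin D → ZMod 2) : ℝ) = 2 ^ D := by simp
  have htail := sum_ite_lt_abs_card_image_sub_le (ι := Fin (2 ^ D)) (mixD_nonneg (l := l) hα)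
    (sum_mixD hs) (Real.exp (-1) * Real.cosh α * 2 ^ D)
    (a := r * Real.sqrt (2 ^ D)) (by positivity)
  rw [hcard, ← one_sub_mul, Fintype.card_fin, mul_pow, Real.sq_sqrt (by positivity)] at htail
  refine htail.trans ?_
  have hmean := (sq_le_one_iff_abs_le_one _).2 (abs_sum_one_sub_mixD_pow_sub_le (l := l) hα hs)
  rw [div_le_div_iff₀ (by positivity) (by positivity)]
  nlinarith [sq_pos_of_pos hr]

end Mixture

/-- concentration of the number of distinct elements among
`n = 2^D` i.i.d. samples from `D^α_{l,s}`. -/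
theorem stmt_11 :
    ∃ n₀ : ℕ, ∀ D : ℕ, n₀ ≤ 2 ^ D → ∀ α : ℝ, 0 < α → α < 0.01 →
      ∀ l : ZMod 2, ∀ s : Fin D → ZMod 2, s ≠ 0 →
        ∑ Y : Fin (2 ^ D) → (Fin D → ZMod 2),
            (if 10 * Real.sqrt ((2 : ℝ) ^ D) <
                |((Finset.univ.image Y).card : ℝ) -
                  (1 - Real.exp (-1) * Real.cosh α) * (2 : ℝ) ^ D| then
              ∏ i, mixD D α l s (Y i) else 0)
          < 0.01 :=
  ⟨0, fun _ _ _ hα0 hα1 _ _ hs => (stmt_11_general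
    (abs_le.2 ⟨by linarith, by linarith⟩) hs (by norm_num)).trans_lt (by norm_num)⟩
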